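/- arXiv:2212.02543 — 2 statements merged into one kernel-verified Lean document; each statement's English description precedes it below -/
import Mathlib

section
/- The convex hull of the unitary group U(d) inside M_d(ℂ) is exactly the set of d×d complex matrices U with operator norm ‖U‖_∞ ≤ 1. -/
abbrev Ed (d : ℕ) := EuclideanSpace ℂ (Fin d)
theorem polar_aux {E : Type*} [NormedAddCommGroup E] [InnerProductSpace ℂ E] [FiniteDimensional ℂ E] [CompleteSpace E] (A P : E →L[ℂ] E) (h : ∀ v, ‖A v‖ = ‖P v‖) :
    ∃ W ∈ unitary (E →L[ℂ] E), A = W * P := by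
  obtain ⟨g, hg⟩ := LinearMap.exists_rightInverse_of_surjective (P : E →ₗ[ℂ] E).rangeRestrict (LinearMap.range_rangeRestrict _)
  have hg' : ∀ y : LinearMap.range (P : E →ₗ[ℂ] E), P (g y) = y := fun y => by
    have := congrArg Subtype.val (LinearMap.congr_fun hg y)
    simpa using this
  let L : LinearMap.range (P : E →ₗ[ℂ] E) →ₗᵢ[ℂ] E :=
    { toLinearMap := (A : E →ₗ[ℂ] E) ∘ₗ g
      norm_map' := fun y => by
        show ‖A (g y)‖ = ‖y‖
        rw [h, hg']; rfl }
  have hL : ∀ v, L.extend (P v) = A v := fun v => by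
    have h1 := L.extend_apply ⟨P v, ⟨v, rfl⟩⟩
    refine h1.trans ?_
    show A (g _) = A v
    rw [← sub_eq_zero, ← map_sub, ← norm_eq_zero, h, map_sub, hg']
    simp
  let W := L.extend.toLinearIsometryEquiv rfl
  refine ⟨(W : E →L[ℂ] E), ?_, ?_⟩
  · exact (Unitary.linearIsometryEquiv.symm W).2
  · ext v
    exact (hL v).symm

theorem hull_aux {E : Type*} [NormedAddCommGroup E] [InnerProductSpace ℂ E] [FiniteDimensional ℂ E] [CompleteSpace E] (A : E →L[ℂ] E) (hA : ‖A‖ ≤ 1) :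
    A ∈ convexHull ℝ (unitary (E →L[ℂ] E) : Set (E →L[ℂ] E)) := by
  have hsa : IsSelfAdjoint (CFC.abs A) := (CFC.abs_nonneg A).isSelfAdjoint
  obtain ⟨W, hW, hWA⟩ := polar_aux A (CFC.abs A) (fun v => by
    have h1 := CFC.abs_mul_abs A
    have h2 : ∀ B : E →L[ℂ] E, ‖B v‖ ^ 2 = RCLike.re (inner ℂ v ((star B * B) v)) := fun B => by
      rw [ContinuousLinearMap.star_eq_adjoint]
      exact ContinuousLinearMap.apply_norm_sq_eq_inner_adjoint_right B v
    have h3 : ‖A v‖ ^ 2 = ‖CFC.abs A v‖ ^ 2 := by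
      rw [h2, h2, hsa.star_eq, h1]
    exact (sq_eq_sq₀ (norm_nonneg _) (norm_nonneg _)).1 h3)
  have hn : ‖CFC.abs A‖ ≤ 1 := by simpa using hA
  let a : selfAdjoint (E →L[ℂ] E) := ⟨CFC.abs A, hsa⟩
  let u := selfAdjoint.unitarySelfAddISMul a hn
  have hr := selfAdjoint.realPart_unitarySelfAddISMul a hn
  have hr2 := congrArg (Subtype.val) hr
  rw [realPart_apply_coe] at hr2
  have : A = (1/2 : ℝ) • (W * (u : E →L[ℂ] E)) + (1/2 : ℝ) • (W * star (u : E →L[ℂ] E)) := by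
    conv_lhs => rw [hWA]
    rw [← smul_add, ← mul_add, ← mul_smul_comm]
    congr 1
    rw [show (1/2 : ℝ) = 2⁻¹ by norm_num]
    exact hr2.symm
  rw [this]
  exact (convex_convexHull ℝ _) (subset_convexHull ℝ _ (mul_mem hW u.2))
    (subset_convexHull ℝ _ (mul_mem hW (Unitary.star_mem u.2))) (by norm_num) (by norm_num) (by norm_num)

open Matrix

/-- the convex hull of the unitary group `U(d)` inside `M_d(ℂ)` is exactly
the set of `d×d` complex matrices of operator norm at most 1 (ℓ²-contractions). -/
theorem convexHull_unitaryGroup_eq_contractions (d : ℕ) :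
    convexHull ℝ ((Matrix.unitaryGroup (Fin d) ℂ : Set (Matrix (Fin d) (Fin d) ℂ)))
      = {A : Matrix (Fin d) (Fin d) ℂ |
          ∀ v : Fin d → ℂ, ∑ i, ‖A.mulVec v i‖ ^ 2 ≤ ∑ i, ‖v i‖ ^ 2} := by
  let e := Matrix.toEuclideanCLM (n := Fin d) (𝕜 := ℂ)
  let er : Matrix (Fin d) (Fin d) ℂ →ₗ[ℝ] (Ed d →L[ℂ] Ed d) :=
    (e.toAlgEquiv.toLinearMap).restrictScalars ℝ
  have hinj : Function.Injective er := e.injective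
  have hU : er '' (Matrix.unitaryGroup (Fin d) ℂ : Set (Matrix (Fin d) (Fin d) ℂ))
      = (unitary (Ed d →L[ℂ] Ed d) : Set _) := by
    ext T
    constructor
    · rintro ⟨B, hB, rfl⟩
      exact Unitary.map_mem e hB
    · intro hT
      exact ⟨e.symm T, Unitary.map_mem e.symm hT, e.apply_symm_apply T⟩
  have hset : {A : Matrix (Fin d) (Fin d) ℂ |
          ∀ v : Fin d → ℂ, ∑ i, ‖A.mulVec v i‖ ^ 2 ≤ ∑ i, ‖v i‖ ^ 2} = er ⁻¹' Metric.closedBall 0 1 := by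
    ext A
    rw [Set.mem_preimage, mem_closedBall_zero_iff, ContinuousLinearMap.opNorm_le_iff zero_le_one]
    have key : ∀ v : Ed d, ‖er A v‖ ≤ 1 * ‖v‖ ↔ ∑ i, ‖A.mulVec v.ofLp i‖ ^ 2 ≤ ∑ i, ‖v i‖ ^ 2 := by
      intro v
      rw [one_mul, ← sq_le_sq₀ (norm_nonneg _) (norm_nonneg _), EuclideanSpace.norm_sq_eq, EuclideanSpace.norm_sq_eq]
      rfl
    exact ⟨fun h v => (key v).2 (h _), fun h v => (key (WithLp.toLp 2 v)).1 (h _)⟩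
  rw [hset]
  apply Set.Subset.antisymm
  · refine convexHull_min ?_ ((convex_closedBall _ _).linear_preimage er)
    intro B hB
    have : er B ∈ (unitary (Ed d →L[ℂ] Ed d) : Set _) := hU ▸ ⟨B, hB, rfl⟩
    rw [Set.mem_preimage, mem_closedBall_zero_iff]
    rcases subsingleton_or_nontrivial (Ed d →L[ℂ] Ed d) with hs | hs
    · rw [Subsingleton.elim (er B) 0, norm_zero]
      exact zero_le_one
    · exact (CStarRing.norm_of_mem_unitary this).le
  · intro A hA
    have := hull_aux (er A) (by simpa using hA)
    rw [← hU, ← LinearMap.image_convexHull] at this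
    exact hinj.mem_set_image.1 this
end

section
/- Let U be Haar-random on U(2^N) with N = N_S + N_A, and define the tomographic ensemble states |φ_m⟩ = (I_S ⊗ ⟨0|_A) U† |m⟩ / √q_m with probabilities q_m = Tr[F_m]/d_S. Then the pair (q_m, |φ_m⟩) has the property that the conditional distribution of |φ_m⟩ given q_m is invariant under every unitary U_S on H_S, and hence equals the Haar (unitarily invariant) measure on unit vectors of H_S; consequently 𝔼_U ∑_m q_m (|φ_m⟩⟨φ_m|)^{⊗k} equals the k-th moment of the Haar ensemble. -/
open Matrix MeasureTheory
open scoped ComplexConjugate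

instance matrixMeasurableSpace {m n α : Type*} [MeasurableSpace α] :
    MeasurableSpace (Matrix m n α) :=
  inferInstanceAs (MeasurableSpace (m → n → α))

/-- The permutation operator `π_σ` on the `k`-fold tensor power of `ℂ^{d_S}`. -/
def permOp (dS k : ℕ) (σ : Equiv.Perm (Fin k)) :
    Matrix (Fin k → Fin dS) (Fin k → Fin dS) ℂ :=
  Matrix.of fun i j => if i = j ∘ σ then 1 else 0

/-- occupation numbers of a word -/
noncomputable def occ {d k : ℕ} (i : Fin k → Fin d) : Fin d →₀ ℕ :=
  ∑ t, Finsupp.single (i t) 1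

theorem occ_apply {d k : ℕ} (i : Fin k → Fin d) (a : Fin d) :
    occ i a = (Finset.univ.filter fun t => i t = a).card := by
  simp [occ, Finsupp.finsetSum_apply, Finsupp.single_apply]

theorem occ_comp {d k : ℕ} (i : Fin k → Fin d) (σ : Equiv.Perm (Fin k)) :
    occ (i ∘ σ) = occ i := by
  unfold occ
  exact Equiv.sum_comp σ (fun t => Finsupp.single (i t) 1)

theorem occ_eq {d k : ℕ} {i j : Fin k → Fin d} (h : occ i = occ j) :
    ∃ σ : Equiv.Perm (Fin k), i = j ∘ σ := by
  have hc : ∀ a, Nonempty ({t // i t = a} ≃ {t // j t = a}) := by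
    intro a
    refine ⟨Fintype.equivOfCardEq ?_⟩
    have := DFunLike.congr_fun h a
    rw [occ_apply, occ_apply] at this
    rw [Fintype.card_subtype, Fintype.card_subtype, this]
  let e := fun a => Classical.choice (hc a)
  refine ⟨Equiv.ofFiberEquiv e, ?_⟩
  funext t
  exact (Equiv.ofFiberEquiv_map e t).symm

theorem prod_word {d k : ℕ} (i : Fin k → Fin d) (a : Fin d) (z : ℂ) :
    ∏ t, (if i t = a then z else 1) = z ^ (occ i a) := by
  rw [occ_apply, Finset.prod_ite]; simp

theorem prod_occ {d k : ℕ} {i j : Fin k → Fin d} (h : occ i = occ j) (x : Fin d → ℂ) :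
    ∏ t, x (i t) = ∏ t, x (j t) := by
  obtain ⟨σ, rfl⟩ := occ_eq h
  exact Equiv.prod_comp σ (fun t => x (j t))

theorem fix_count (d k : ℕ) :
    ∑ i : Fin k → Fin d, ∑ σ : Equiv.Perm (Fin k), (if i = i ∘ σ then (1 : ℂ) else 0)
      = ∏ t ∈ Finset.range k, ((d : ℂ) + (t : ℂ)) := by
  induction k with
  | zero =>
    have : ∀ (i : Fin 0 → Fin d) (σ : Equiv.Perm (Fin 0)), i = i ∘ σ :=
      fun i σ => Subsingleton.elim _ _
    simp [← this]
  | succ k ih =>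
    rw [Finset.prod_range_succ, ← ih, ← (Fin.consEquiv (fun _ => Fin d)).sum_comp,
      Fintype.sum_prod_type_right]
    rw [Finset.sum_mul]
    refine Finset.sum_congr rfl fun i _ => ?_
    have key : ∀ (a : Fin d) (p : Fin (k+1)) (e : Equiv.Perm (Fin k)),
        ((Fin.consEquiv (fun _ => Fin d)) (a, i) =
          (Fin.consEquiv (fun _ => Fin d)) (a, i) ∘ (Equiv.Perm.decomposeFin.symm (p, e)))
        ↔ (a = (Fin.cons a i : Fin (k+1) → Fin d) p ∧ i = i ∘ e) := by
      intro a p e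
      simp only [Fin.consEquiv, Equiv.coe_fn_mk]
      have hsw : a = (Fin.cons a i : Fin (k+1) → Fin d) p →
          ∀ s, (Fin.cons a i : Fin (k+1) → Fin d) (Equiv.swap 0 p s) =
            (Fin.cons a i : Fin (k+1) → Fin d) s := by
        intro h s
        rw [Equiv.swap_apply_def]
        split_ifs with h1 h2
        · rw [← h, h1]; rfl
        · rw [h2, ← h]; rfl
        · rfl
      constructor
      · intro h
        have h0 := congrFun h 0
        simp only [Function.comp, Equiv.Perm.decomposeFin_symm_apply_zero, Fin.cons_zero] at h0
        refine ⟨h0, ?_⟩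
        funext t
        have ht := congrFun h t.succ
        simp only [Function.comp, Equiv.Perm.decomposeFin_symm_apply_succ, hsw h0,
          Fin.cons_succ] at ht
        exact ht
      · rintro ⟨h0, h1⟩
        funext t
        refine Fin.cases ?_ (fun t => ?_) t
        · simp only [Function.comp, Equiv.Perm.decomposeFin_symm_apply_zero, Fin.cons_zero]
          exact h0
        · simp only [Function.comp, Equiv.Perm.decomposeFin_symm_apply_succ, hsw h0,
            Fin.cons_succ]
          exact congrFun h1 t
    have : ∀ a : Fin d, (∑ σ : Equiv.Perm (Fin (k+1)),
        (if (Fin.consEquiv (fun _ => Fin d)) (a, i) = (Fin.consEquiv (fun _ => Fin d)) (a, i) ∘ σ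
          then (1:ℂ) else 0)) =
        ∑ p : Fin (k+1), (if a = (Fin.cons a i : Fin (k+1) → Fin d) p then (1:ℂ) else 0) *
          ∑ e : Equiv.Perm (Fin k), (if i = i ∘ e then (1:ℂ) else 0) := by
      intro a
      rw [← Equiv.Perm.decomposeFin.symm.sum_comp, Fintype.sum_prod_type]
      refine Finset.sum_congr rfl fun p _ => ?_
      rw [Finset.mul_sum]
      refine Finset.sum_congr rfl fun e _ => ?_
      rw [if_congr (key a p e) rfl rfl, ite_and]
      split_ifs <;> simp
    rw [Finset.sum_congr rfl (fun a _ => this a)]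
    simp_rw [← Finset.sum_mul]
    rw [mul_comm]
    congr 1
    rw [Finset.sum_comm, Fin.sum_univ_succ]
    simp

theorem exists_unitary_row {d : ℕ} (a : Fin d) (x : Fin d → ℂ)
    (hx : ∑ b, conj (x b) * x b = 1) :
    ∃ U ∈ Matrix.unitaryGroup (Fin d) ℂ, ∀ b, U a b = x b := by
  let v : EuclideanSpace ℂ (Fin d) := WithLp.toLp 2 x
  have hv : Orthonormal ℂ (({a} : Set (Fin d)).domRestrict (fun _ => v)) := by
    rw [orthonormal_iff_ite]
    rintro ⟨i, hi⟩ ⟨j, hj⟩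
    have : i = j := by rw [Set.mem_singleton_iff] at hi hj; rw [hi, hj]
    subst this
    simp only [if_true, Set.domRestrict_apply]
    rw [PiLp.inner_apply]
    rw [← hx]
    refine Finset.sum_congr rfl fun c _ => ?_
    rw [RCLike.inner_apply, mul_comm]
  obtain ⟨b, hb⟩ := hv.exists_orthonormalBasis_extension_of_card_eq (by simp)
  have hu := (EuclideanSpace.basisFun (Fin d) ℂ).toMatrix_orthonormalBasis_mem_unitary b
  refine ⟨((EuclideanSpace.basisFun (Fin d) ℂ).toBasis.toMatrix b)ᵀ, ?_, ?_⟩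
  · rw [Matrix.mem_unitaryGroup_iff'] at hu
    rw [Matrix.mem_unitaryGroup_iff]
    have h2 := congrArg Matrix.transpose hu
    rw [Matrix.transpose_mul, Matrix.transpose_one] at h2
    exact h2
  · intro c
    have := hb a rfl
    simp [Module.Basis.toMatrix_apply, this, v]

/-- core algebraic fact -/
theorem invariant_tensor {d k : ℕ} (hd : 0 < d)
    (T : (Fin k → Fin d) → (Fin k → Fin d) → ℂ)
    (h1 : ∀ U ∈ Matrix.unitaryGroup (Fin d) ℂ, ∀ i j, T i j =
      ∑ i', ∑ j', (∏ t, U (i t) (i' t)) * (∏ t, conj (U (j t) (j' t))) * T i' j')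
    (h2 : ∀ i j (σ : Equiv.Perm (Fin k)), T (i ∘ σ) j = T i j)
    (h2' : ∀ i j (σ : Equiv.Perm (Fin k)), T i (j ∘ σ) = T i j)
    (h3 : ∑ i, T i i = 1) (i j : Fin k → Fin d) :
    T i j = (∑ σ : Equiv.Perm (Fin k), (if i = j ∘ σ then (1 : ℂ) else 0)) /
      ∏ t ∈ Finset.range k, ((d : ℂ) + (t : ℂ)) := by
  classical
  have off : ∀ i j, occ i ≠ occ j → T i j = 0 := by
    intro i j hij
    obtain ⟨a, ha⟩ : ∃ a, occ i a ≠ occ j a := by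
      by_contra hcon
      push Not at hcon
      exact hij (Finsupp.ext hcon)
    set w : ℂ := (Real.pi / ((occ i a : ℝ) - (occ j a : ℝ)) : ℝ) * Complex.I with hw
    have hcw : conj w = -w := by simp [hw]
    have hz : conj (Complex.exp w) = Complex.exp (-w) := by
      rw [← Complex.exp_conj, hcw]
    let f : Fin d → ℂ := fun b => if b = a then Complex.exp w else 1
    have hf : ∀ b, f b * conj (f b) = 1 := by
      intro b
      simp only [f]
      split_ifs
      · rw [hz, ← Complex.exp_add]; simp
      · simp
    have hU : Matrix.diagonal f ∈ Matrix.unitaryGroup (Fin d) ℂ := by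
      rw [Matrix.mem_unitaryGroup_iff, Matrix.star_eq_conjTranspose,
        Matrix.diagonal_conjTranspose, Matrix.diagonal_mul_diagonal]
      rw [← Matrix.diagonal_one]
      congr 1
      funext b
      exact hf b
    have hpd : ∀ i i' : Fin k → Fin d, i' ≠ i → ∏ t, Matrix.diagonal f (i t) (i' t) = 0 := by
      intro i i' h
      obtain ⟨t, ht⟩ := Function.ne_iff.1 h
      exact Finset.prod_eq_zero (Finset.mem_univ t) (Matrix.diagonal_apply_ne _ (Ne.symm ht))
    have e := h1 _ hU i j
    rw [Finset.sum_eq_single i, Finset.sum_eq_single j] at e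
    · simp only [Matrix.diagonal_apply_eq] at e
      have e1 : ∏ t, f (i t) = Complex.exp w ^ (occ i a) := prod_word i a _
      have e2 : ∏ t, conj (f (j t)) = Complex.exp (-w) ^ (occ j a) := by
        rw [← map_prod, prod_word j a, map_pow, hz]
      have hne : ((occ i a : ℝ) - (occ j a : ℝ)) ≠ 0 := by
        rw [sub_ne_zero]; exact_mod_cast ha
      rw [e1, e2, ← Complex.exp_nat_mul, ← Complex.exp_nat_mul, ← Complex.exp_add] at e
      have : (occ i a : ℂ) * w + (occ j a : ℂ) * (-w) = Real.pi * Complex.I := by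
        have : (occ i a : ℂ) * w + (occ j a : ℂ) * (-w) =
          ((((occ i a : ℝ) - (occ j a : ℝ)) *
            (Real.pi / ((occ i a : ℝ) - (occ j a : ℝ))) : ℝ) : ℂ) * Complex.I := by
          rw [hw]; push_cast; ring
        rw [this, mul_div_cancel₀ _ hne]
      rw [this, Complex.exp_pi_mul_I] at e
      have : (2 : ℂ) * T i j = 0 := by linear_combination e
      simpa using this
    · intro j' _ hj'
      rw [← map_prod, hpd _ _ hj']; simp
    · simp
    · intro i' _ hi'
      refine Finset.sum_eq_zero fun j' _ => ?_
      rw [hpd _ _ hi']; simp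
    · simp
  set C : ℂ := T (fun _ => ⟨0, hd⟩) (fun _ => ⟨0, hd⟩) with hC
  have unit : ∀ x : Fin d → ℂ, ∑ b, conj (x b) * x b = 1 →
      C = ∑ i', ∑ j', (∏ t, x (i' t)) * (∏ t, conj (x (j' t))) * T i' j' := by
    intro x hx
    obtain ⟨U, hU, hUx⟩ := exists_unitary_row ⟨0, hd⟩ x hx
    rw [hC, h1 U hU]
    simp only [hUx]
  have pos : ∀ y : Fin d → ℝ, (∀ b, 0 < y b) →
      ∑ i', (∑ j', T i' j') * ∏ t, (y (i' t) : ℂ) = C * ∑ i' : Fin k → Fin d, ∏ t, (y (i' t) : ℂ) := by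
    intro y hy
    have hs : 0 < ∑ b, y b :=
      Finset.sum_pos (fun b _ => hy b) ⟨⟨0, hd⟩, Finset.mem_univ _⟩
    set s := ∑ b, y b with hsdef
    let x : Fin d → ℂ := fun b => ((Real.sqrt (y b / s) : ℝ) : ℂ)
    have hxx : ∀ b, x b * x b = (y b : ℂ) / s := by
      intro b
      simp only [x]
      rw [← Complex.ofReal_mul, Real.mul_self_sqrt (div_pos (hy b) hs).le]
      push_cast; rfl
    have hxc : ∀ b, conj (x b) = x b := fun b => Complex.conj_ofReal _
    have hs' : (s : ℂ) ≠ 0 := by exact_mod_cast hs.ne'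
    have hx : ∑ b, conj (x b) * x b = 1 := by
      simp only [hxc, hxx]
      rw [← Finset.sum_div, ← Complex.ofReal_sum, ← hsdef, div_self hs']
    have e := unit x hx
    have : ∀ i' j', (∏ t, x (i' t)) * (∏ t, conj (x (j' t))) * T i' j' =
        T i' j' * ((∏ t, (y (i' t) : ℂ)) / s ^ k) := by
      intro i' j'
      by_cases h : occ i' = occ j'
      · simp only [hxc]
        rw [← prod_occ h x, ← Finset.prod_mul_distrib]
        simp only [hxx]
        rw [Finset.prod_div_distrib]
        simp [mul_comm]
      · rw [off _ _ h]; simp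
    simp only [this] at e
    have hsum : ∑ i' : Fin k → Fin d, ∏ t, (y (i' t) : ℂ) = (s:ℂ) ^ k := by
      rw [hsdef, Complex.ofReal_sum, Finset.sum_pow']
      simp [Fintype.piFinset_univ]
    rw [hsum, e]
    simp_rw [← Finset.sum_mul, ← mul_div_assoc]
    rw [← Finset.sum_div, div_mul_cancel₀ _ (pow_ne_zero _ hs')]
  let P : MvPolynomial (Fin d) ℂ :=
    ∑ i' : Fin k → Fin d, MvPolynomial.monomial (occ i') ((∑ j', T i' j') - C)
  have heval : ∀ (i' : Fin k → Fin d) (c : ℂ) (y : Fin d → ℂ),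
      MvPolynomial.eval y (MvPolynomial.monomial (occ i') c) = c * ∏ t, y (i' t) := by
    intro i' c y
    have : MvPolynomial.monomial (occ i') c =
        MvPolynomial.C c * ∏ t, (MvPolynomial.X (i' t) : MvPolynomial (Fin d) ℂ) := by
      rw [← mul_one c, ← MvPolynomial.C_mul_monomial]
      congr 1
      · simp
      · rw [occ, MvPolynomial.monomial_sum_one]
        rfl
    rw [this]
    simp
  have hP : P = 0 := by
    refine MvPolynomial.funext_set (fun _ => Complex.ofReal '' Set.Ioi (0:ℝ)) ?_ ?_
    · intro _
      exact (Set.Ioi_infinite 0).image (Complex.ofReal_injective.injOn)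
    · intro x hx
      choose y hy hyx using fun b => hx b (Set.mem_univ b)
      have e := pos y hy
      simp only [hyx] at e
      simp only [P, map_sum, heval, map_zero, sub_mul, Finset.sum_sub_distrib]
      rw [e, Finset.mul_sum, sub_self]
  have hSocc : ∀ i j, occ i = occ j → T i = T j := by
    intro i j h
    obtain ⟨σ, rfl⟩ := occ_eq h
    funext j'
    exact h2 _ _ _
  have hTocc : ∀ i j, occ i = occ j → T i j = T i i := by
    intro i j h
    obtain ⟨σ, rfl⟩ := occ_eq h.symm
    exact h2' _ _ _
  let n : (Fin k → Fin d) → ℂ := fun i =>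
    ((Finset.univ.filter fun j : Fin k → Fin d => occ j = occ i).card : ℂ)
  have hn : ∀ i, n i ≠ 0 := by
    intro i
    simp only [n]
    rw [Nat.cast_ne_zero]
    exact Finset.card_ne_zero.2 ⟨i, by simp⟩
  have hS : ∀ i, ∑ j, T i j = C := by
    intro i
    have e : MvPolynomial.coeff (occ i) P = 0 := by rw [hP]; simp
    simp only [P, MvPolynomial.coeff_sum, MvPolynomial.coeff_monomial] at e
    rw [← Finset.sum_filter] at e
    rw [Finset.sum_congr rfl (g := fun _ => (∑ j, T i j) - C)] at e
    · rw [Finset.sum_const, nsmul_eq_mul, mul_eq_zero] at e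
      exact sub_eq_zero.1 (e.resolve_left (hn i))
    · intro i' hi'
      rw [hSocc i' i (Finset.mem_filter.1 hi').2]
  have hrow : ∀ (B : (Fin k → Fin d) → (Fin k → Fin d) → ℂ),
      (∀ i j, occ i ≠ occ j → B i j = 0) → (∀ i j, occ i = occ j → B i j = B i i) →
      ∀ i, ∑ j, B i j = n i * B i i := by
    intro B hB0 hB i
    rw [← Finset.sum_filter_add_sum_filter_not Finset.univ (fun j => occ j = occ i)]
    rw [Finset.sum_congr rfl (g := fun _ => B i i), Finset.sum_const, nsmul_eq_mul]
    · rw [Finset.sum_eq_zero, add_zero]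
      intro j hj
      exact hB0 _ _ (Ne.symm (Finset.mem_filter.1 hj).2)
    · intro j hj
      exact hB _ _ (Finset.mem_filter.1 hj).2.symm
  let A : (Fin k → Fin d) → (Fin k → Fin d) → ℂ := fun i j =>
    ∑ σ : Equiv.Perm (Fin k), (if i = j ∘ σ then (1 : ℂ) else 0)
  have hA0 : ∀ i j, occ i ≠ occ j → A i j = 0 := by
    intro i j h
    refine Finset.sum_eq_zero fun σ _ => if_neg ?_
    rintro rfl
    exact h (occ_comp _ _)
  have hA1 : ∀ i j, occ i = occ j → A i j = A i i := by
    intro i j h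
    obtain ⟨τ, rfl⟩ := occ_eq h.symm
    simp only [A]
    rw [← Equiv.sum_comp (Equiv.mulLeft τ) (fun σ : Equiv.Perm (Fin k) =>
      if i = i ∘ σ then (1:ℂ) else 0)]
    rfl
  have hAs : ∀ i, ∑ j, A i j = (Nat.factorial k : ℂ) := by
    intro i
    simp only [A]
    rw [Finset.sum_comm]
    have : ∀ σ : Equiv.Perm (Fin k),
        ∑ j : Fin k → Fin d, (if i = j ∘ σ then (1:ℂ) else 0) = 1 := by
      intro σ
      rw [Finset.sum_eq_single (i ∘ σ.symm)]
      · rw [if_pos]; funext t; simp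
      · intro j _ hj
        refine if_neg fun h => hj ?_
        subst h
        funext t; simp
      · simp
    simp [this, Fintype.card_perm]
  have hrel : ∀ i, T i i * (Nat.factorial k : ℂ) = C * A i i := by
    intro i
    have e1 := hrow T off hTocc i
    have e2 := hrow A hA0 hA1 i
    rw [hS] at e1
    rw [hAs] at e2
    rw [e1, e2]; ring
  have hD : ∏ t ∈ Finset.range k, ((d : ℂ) + (t : ℂ)) ≠ 0 := by
    rw [Finset.prod_ne_zero_iff]
    intro t _
    have : ((d + t : ℕ) : ℂ) ≠ 0 := Nat.cast_ne_zero.2 (by omega)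
    simpa using this
  have hk : (Nat.factorial k : ℂ) ≠ 0 := Nat.cast_ne_zero.2 (Nat.factorial_ne_zero k)
  have hCD : (Nat.factorial k : ℂ) = C * ∏ t ∈ Finset.range k, ((d : ℂ) + (t : ℂ)) := by
    rw [← fix_count, Finset.mul_sum]
    have : ∑ i, T i i * (Nat.factorial k : ℂ) = ∑ i, C * A i i :=
      Finset.sum_congr rfl fun i _ => hrel i
    rw [← Finset.sum_mul, h3, one_mul] at this
    exact this
  change T i j = A i j / _
  by_cases h : occ i = occ j
  · rw [hTocc _ _ h, hA1 _ _ h, eq_div_iff hD]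
    apply mul_right_cancel₀ hk
    calc _ = (T i i * (Nat.factorial k : ℂ)) * ∏ t ∈ Finset.range k, ((d : ℂ) + (t : ℂ)) := by ring
      _ = A i i * (C * ∏ t ∈ Finset.range k, ((d : ℂ) + (t : ℂ))) := by rw [hrel]; ring
      _ = _ := by rw [← hCD]
  · rw [off _ _ h, hA0 _ _ h, zero_div]

/-- the summand of the moment operator -/
noncomputable def momQ {d : ℕ} (k : ℕ) (M : Matrix (Fin d) (Fin d) ℂ) (i j : Fin k → Fin d) : ℂ :=
  (∏ t, M (i t) (j t)) / M.trace ^ (k - 1)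

theorem momQ_conj {d k : ℕ} (M US : Matrix (Fin d) (Fin d) ℂ)
    (hU : US ∈ Matrix.unitaryGroup (Fin d) ℂ) (i j : Fin k → Fin d) :
    momQ k (US * M * USᴴ) i j = ∑ i' : Fin k → Fin d, ∑ j' : Fin k → Fin d,
      (∏ t, US (i t) (i' t)) * (∏ t, conj (US (j t) (j' t))) * momQ k M i' j' := by
  have htr : (US * M * USᴴ).trace = M.trace := by
    rw [Matrix.trace_mul_comm, ← Matrix.mul_assoc]
    have := (Matrix.mem_unitaryGroup_iff'.1 hU)
    rw [Matrix.star_eq_conjTranspose] at this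
    rw [this, Matrix.one_mul]
  have hent : ∀ a b, (US * M * USᴴ) a b =
      ∑ a', US a a' * ∑ b', (M a' b' * conj (US b b')) := by
    intro a b
    rw [Matrix.mul_assoc, Matrix.mul_apply]
    simp only [Matrix.mul_apply, Matrix.conjTranspose_apply]
    rfl
  unfold momQ
  rw [htr]
  simp only [hent]
  rw [Fintype.prod_sum, Finset.sum_div]
  refine Finset.sum_congr rfl fun i' _ => ?_
  rw [Finset.prod_mul_distrib, Fintype.prod_sum, Finset.mul_sum, Finset.sum_div]
  refine Finset.sum_congr rfl fun j' _ => ?_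
  rw [Finset.prod_mul_distrib]
  ring

theorem momQ_bound {d k : ℕ} (hk : 0 < k) (M : Matrix (Fin d) (Fin d) ℂ) (v : Fin d → ℂ)
    (hM : ∀ a b, M a b = conj (v a) * v b) (i j : Fin k → Fin d) :
    ‖momQ k M i j‖ ≤ ∑ a, ‖v a‖ ^ 2 := by
  set N := ∑ a, ‖v a‖ ^ 2 with hN
  have hN0 : 0 ≤ N := Finset.sum_nonneg fun a _ => by positivity
  have hle : ∀ a, ‖v a‖ ^ 2 ≤ N := fun a =>
    Finset.single_le_sum (f := fun a => ‖v a‖ ^ 2) (fun a _ => by positivity) (Finset.mem_univ a)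
  have htr : M.trace = (N : ℂ) := by
    simp only [Matrix.trace, Matrix.diag, hM, hN]
    push_cast
    refine Finset.sum_congr rfl fun a _ => ?_
    exact Complex.conj_mul' _
  have hent : ∀ a b, ‖M a b‖ ≤ N := by
    intro a b
    rw [hM, norm_mul, RCLike.norm_conj]
    nlinarith [hle a, hle b, sq_nonneg (‖v a‖ - ‖v b‖)]
  have hprod : ‖∏ t, M (i t) (j t)‖ ≤ N ^ k := by
    rw [norm_prod]
    calc _ ≤ ∏ _t : Fin k, N :=
          Finset.prod_le_prod (fun _ _ => norm_nonneg _) (fun _ _ => hent _ _)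
      _ = N ^ k := by simp
  unfold momQ
  rw [htr, norm_div, norm_pow, Complex.norm_real, Real.norm_of_nonneg hN0]
  rcases hN0.eq_or_lt with h | h
  · rw [← h, zero_pow hk.ne'] at hprod
    rw [le_antisymm hprod (norm_nonneg _), zero_div]
    exact hN0
  · rw [div_le_iff₀ (pow_pos h _)]
    obtain ⟨l, rfl⟩ : ∃ l, k = l + 1 := ⟨k - 1, by omega⟩
    simpa [pow_succ, mul_comm] using hprod

theorem momQ_trace {d k : ℕ} (hk : 0 < k) (M : Matrix (Fin d) (Fin d) ℂ) :
    ∑ i : Fin k → Fin d, momQ k M i i = M.trace := by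
  unfold momQ
  rw [← Finset.sum_div]
  have : ∑ i : Fin k → Fin d, ∏ t, M (i t) (i t) = M.trace ^ k := by
    rw [Matrix.trace, Finset.sum_pow']
    simp [Fintype.piFinset_univ]
  rw [this]
  obtain ⟨l, rfl⟩ : ∃ l, k = l + 1 := ⟨k - 1, by omega⟩
  simp only [Nat.add_sub_cancel]
  by_cases h : M.trace = 0
  · simp [h]
  · rw [pow_succ]
    field_simp

theorem momQ_perm {d k : ℕ} (M : Matrix (Fin d) (Fin d) ℂ) (v : Fin d → ℂ)
    (hM : ∀ a b, M a b = conj (v a) * v b) (i j : Fin k → Fin d) (σ τ : Equiv.Perm (Fin k)) :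
    momQ k M (i ∘ σ) (j ∘ τ) = momQ k M i j := by
  unfold momQ
  simp only [hM, Finset.prod_mul_distrib, Function.comp]
  rw [Equiv.prod_comp σ (fun t => conj (v (i t))), Equiv.prod_comp τ (fun t => v (j t))]

theorem total_weight {dS dA : ℕ} (U : Matrix (Fin dS × Fin dA) (Fin dS × Fin dA) ℂ)
    (hU : U ∈ Matrix.unitaryGroup (Fin dS × Fin dA) ℂ)
    (ψ : Fin dA → ℂ) (hψ : ∑ a, conj (ψ a) * ψ a = 1) :
    ∑ m, ∑ j : Fin dS, conj (∑ b, U m (j, b) * ψ b) * (∑ b, U m (j, b) * ψ b) = (dS : ℂ) := by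
  rw [Finset.sum_comm]
  have hUU := Matrix.mem_unitaryGroup_iff'.1 hU
  have : ∀ j : Fin dS,
      ∑ m, conj (∑ b, U m (j, b) * ψ b) * (∑ b, U m (j, b) * ψ b) = 1 := by
    intro j
    have h1 : ∀ b b', ∑ m, conj (U m (j, b)) * U m (j, b') = if b = b' then 1 else 0 := by
      intro b b'
      have := congrFun (congrFun hUU (j, b)) (j, b')
      rw [Matrix.mul_apply, Matrix.one_apply] at this
      simp only [Prod.mk.injEq, true_and] at this
      exact this
    calc _ = ∑ m, ∑ b, ∑ b', (conj (ψ b) * ψ b') * (conj (U m (j, b)) * U m (j, b')) := by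
            refine Finset.sum_congr rfl fun m _ => ?_
            rw [map_sum, Finset.sum_mul_sum]
            refine Finset.sum_congr rfl fun b _ => Finset.sum_congr rfl fun b' _ => ?_
            rw [map_mul]; ring
      _ = ∑ b, ∑ b', (conj (ψ b) * ψ b') * ∑ m, (conj (U m (j, b)) * U m (j, b')) := by
            rw [Finset.sum_comm]
            refine Finset.sum_congr rfl fun b _ => ?_
            rw [Finset.sum_comm]
            simp only [Finset.mul_sum]
      _ = 1 := by simp [h1, hψ]
  rw [Finset.sum_congr rfl fun j _ => this j]
  simp

/-- for `U` Haar-random on `U(2^N)` (`N = N_S + N_A`), the distribution of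
the tomographic-ensemble states `|φ_m⟩` (equivalently, of the operators `F_m`, at fixed
weights `q_m = Tr[F_m]/d_S`) is invariant under every unitary `U_S` on `H_S`; consequently
`𝔼_U ∑_m q_m (|φ_m⟩⟨φ_m|)^{⊗k} = (∑_{σ∈S_k} π_σ)/(d_S(d_S+1)⋯(d_S+k−1))`, the `k`-th
moment of the Haar ensemble. -/
theorem haar_average_moments
    (dS dA k : ℕ) (hdS : 0 < dS) (hk : 0 < k)
    -- a probability measure on matrices, right-invariant and supported on the unitary group
    (μ : Measure (Matrix (Fin dS × Fin dA) (Fin dS × Fin dA) ℂ))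
    (hμprob : IsProbabilityMeasure μ)
    (hμinv : ∀ W ∈ Matrix.unitaryGroup (Fin dS × Fin dA) ℂ,
      MeasurePreserving (fun U => U * W) μ μ)
    (hμsupp : ∀ᵐ U ∂μ, U ∈ Matrix.unitaryGroup (Fin dS × Fin dA) ℂ)
    -- the ancilla initial state, a unit vector
    (ψ : Fin dA → ℂ) (hψ : ∑ a, conj (ψ a) * ψ a = 1)
    -- the (unnormalized) POVM operators `F_m(U) = (I_S ⊗ ⟨0|_A) U† |m⟩⟨m| U (I_S ⊗ |0⟩_A)`
    (F : Matrix (Fin dS × Fin dA) (Fin dS × Fin dA) ℂ → (Fin dS × Fin dA) →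
      Matrix (Fin dS) (Fin dS) ℂ)
    (hF : ∀ U m j j', F U m j j' =
      conj (∑ b, U m (j, b) * ψ b) * (∑ b, U m (j', b) * ψ b))
    -- `U_S† ⊗ I_A` as a matrix on the full space, for a unitary `U_S` on the system
    (W : Matrix (Fin dS) (Fin dS) ℂ → Matrix (Fin dS × Fin dA) (Fin dS × Fin dA) ℂ)
    (hW : ∀ US p q, W US p q = if p.2 = q.2 then USᴴ p.1 q.1 else 0)
    -- `k`-th moment of the tomographic ensemble, `∑_m q_m (|φ_m⟩⟨φ_m|)^{⊗k}`
    (moment : Matrix (Fin dS × Fin dA) (Fin dS × Fin dA) ℂ →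
      Matrix (Fin k → Fin dS) (Fin k → Fin dS) ℂ)
    (hmoment : ∀ U i j, moment U i j =
      (dS : ℂ)⁻¹ * ∑ m, (∏ t, F U m (i t) (j t)) / ((F U m).trace) ^ (k - 1)) :
    -- (a) the Haar measure is preserved by `U ↦ U (U_S† ⊗ I_A)`
    ((∀ US ∈ Matrix.unitaryGroup (Fin dS) ℂ, MeasurePreserving (fun U => U * W US) μ μ)
    -- (b) at fixed weights, the distribution of the `F_m` is invariant under `U_S`-rotations
    ∧ (∀ US ∈ Matrix.unitaryGroup (Fin dS) ℂ, ∀ m,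
        ∀ h : Matrix (Fin dS) (Fin dS) ℂ → ℂ, Measurable h →
          ∫ U, h (F U m) ∂μ = ∫ U, h (US * F U m * USᴴ) ∂μ)
    -- (c) consequently the averaged moment equals the Haar-ensemble `k`-th moment
    ∧ (∀ i j, ∫ U, moment U i j ∂μ =
        ((∑ σ : Equiv.Perm (Fin k), permOp dS k σ) i j)
          / ∏ t ∈ Finset.range k, ((dS : ℂ) + (t : ℂ)))) := by
  have ha : ∀ US ∈ Matrix.unitaryGroup (Fin dS) ℂ, MeasurePreserving (fun U => U * W US) μ μ := by
    intro US hUS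
    apply hμinv
    have : W US = Matrix.kroneckerMap (· * ·) USᴴ (1 : Matrix (Fin dA) (Fin dA) ℂ) := by
      ext p q
      rw [hW, Matrix.kroneckerMap_apply, Matrix.one_apply]
      split_ifs <;> simp
    rw [this]
    refine Matrix.kronecker_mem_unitary ?_ (one_mem _)
    exact Unitary.star_mem hUS
  have hrot : ∀ US m U, F (U * W US) m = US * F U m * USᴴ := by
    intro US m U
    have hv : ∀ j, ∑ b, (U * W US) m (j, b) * ψ b =
        ∑ a, conj (US j a) * ∑ b, U m (a, b) * ψ b := by
      intro j
      simp only [Matrix.mul_apply, hW, Fintype.sum_prod_type, Matrix.conjTranspose_apply]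
      simp only [mul_ite, mul_zero, Finset.sum_ite_eq', Finset.mem_univ, if_true]
      simp only [Finset.sum_mul, Finset.mul_sum]
      rw [Finset.sum_comm]
      refine Finset.sum_congr rfl fun a _ => Finset.sum_congr rfl fun b _ => ?_
      rw [Complex.star_def]; ring
    ext j j'
    rw [hF, hv, hv, Matrix.mul_apply]
    simp only [Matrix.mul_apply, Matrix.conjTranspose_apply, hF]
    rw [map_sum, Finset.sum_mul_sum, Finset.sum_comm]
    refine Finset.sum_congr rfl fun a _ => ?_
    rw [Finset.sum_mul]
    refine Finset.sum_congr rfl fun b _ => ?_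
    rw [map_mul, Complex.conj_conj, Complex.star_def]; ring
  have hent : ∀ m p, Measurable
      (fun U : Matrix (Fin dS × Fin dA) (Fin dS × Fin dA) ℂ => U m p) := by
    intro m p
    exact (measurable_pi_apply p).comp (measurable_pi_apply m)
  have hvm : ∀ m j, Measurable
      (fun U : Matrix (Fin dS × Fin dA) (Fin dS × Fin dA) ℂ => ∑ b, U m (j, b) * ψ b) := by
    intro m j
    exact Finset.measurable_sum _ fun b _ => (hent m (j, b)).mul_const _
  have hFe : ∀ m j j', Measurable (fun U => F U m j j') := by
    intro m j j'
    simp only [hF]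
    exact ((Complex.continuous_conj.measurable).comp (hvm m j)).mul (hvm m j')
  have hFm : ∀ m, Measurable (fun U => F U m) := by
    intro m
    exact measurable_pi_iff.2 fun j => measurable_pi_iff.2 fun j' => hFe m j j'
  have hmp : ∀ US ∈ Matrix.unitaryGroup (Fin dS) ℂ,
      ∀ f : Matrix (Fin dS × Fin dA) (Fin dS × Fin dA) ℂ → ℂ, Measurable f →
      ∫ U, f U ∂μ = ∫ U, f (U * W US) ∂μ := by
    intro US hUS f hf
    have h := ha US hUS
    conv_lhs => rw [← h.map_eq]
    exact integral_map h.measurable.aemeasurable hf.aestronglyMeasurable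
  refine ⟨ha, ?_, ?_⟩
  · intro US hUS m h hh
    rw [hmp US hUS (fun U => h (F U m)) (hh.comp (hFm m))]
    simp only [hrot]
  · have hmom : ∀ U i j, moment U i j = (dS : ℂ)⁻¹ * ∑ m, momQ k (F U m) i j := hmoment
    have hdS' : (dS : ℂ) ≠ 0 := Nat.cast_ne_zero.2 hdS.ne'
    have hQm : ∀ m i j, Measurable (fun U => momQ k (F U m) i j) := by
      intro m i j
      unfold momQ
      refine Measurable.div ?_ ?_
      · exact Finset.measurable_prod _ fun t _ => hFe m (i t) (j t)
      · exact (Finset.measurable_sum _ fun a _ => hFe m a a).pow_const _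
    have hmm : ∀ i j, Measurable (fun U => moment U i j) := by
      intro i j
      simp only [hmom]
      exact (Finset.measurable_sum _ fun m _ => hQm m i j).const_mul _
    have hint : ∀ i j, Integrable (fun U => moment U i j) μ := by
      intro i j
      refine Integrable.of_bound (hmm i j).aestronglyMeasurable 1 ?_
      filter_upwards [hμsupp] with U hU
      have hw : ∑ m, ∑ a : Fin dS, ‖∑ b, U m (a, b) * ψ b‖ ^ 2 = (dS : ℝ) := by
        have := total_weight U hU ψ hψ
        simp only [Complex.conj_mul'] at this
        exact_mod_cast this
      rw [hmom, norm_mul, norm_inv, Complex.norm_natCast]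
      have hdR : (0 : ℝ) < dS := Nat.cast_pos.2 hdS
      rw [inv_mul_le_iff₀ hdR, mul_one, ← hw]
      refine (norm_sum_le _ _).trans (Finset.sum_le_sum fun m _ => ?_)
      exact momQ_bound hk (F U m) _ (hF U m) i j
    intro i j
    have hperm : (∑ σ : Equiv.Perm (Fin k), permOp dS k σ) i j =
        ∑ σ : Equiv.Perm (Fin k), (if i = j ∘ σ then (1 : ℂ) else 0) := by
      rw [Matrix.sum_apply]
      rfl
    rw [hperm]
    refine invariant_tensor hdS (fun i j => ∫ U, moment U i j ∂μ) ?_ ?_ ?_ ?_ i j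
    · intro US hUS i j
      have e : ∀ U, moment (U * W US) i j = ∑ i' : Fin k → Fin dS, ∑ j' : Fin k → Fin dS,
          (∏ t, US (i t) (i' t)) * (∏ t, conj (US (j t) (j' t))) * moment U i' j' := by
        intro U
        simp only [hmom, hrot, momQ_conj _ _ hUS]
        rw [Finset.sum_comm, Finset.mul_sum]
        refine Finset.sum_congr rfl fun i' _ => ?_
        rw [Finset.sum_comm, Finset.mul_sum]
        refine Finset.sum_congr rfl fun j' _ => ?_
        rw [← Finset.mul_sum]; ring
      rw [hmp US hUS _ (hmm i j)]
      simp only [e]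
      rw [integral_finsetSum]
      · refine Finset.sum_congr rfl fun i' _ => ?_
        rw [integral_finsetSum]
        · refine Finset.sum_congr rfl fun j' _ => ?_
          rw [integral_const_mul]
        · intro j' _
          exact (hint i' j').const_mul _
      · intro i' _
        exact integrable_finsetSum _ fun j' _ => (hint i' j').const_mul _
    · intro i j σ
      simp only [hmom]
      congr 1
      funext U
      congr 1
      refine Finset.sum_congr rfl fun m _ => ?_
      exact momQ_perm (F U m) _ (hF U m) i j σ 1
    · intro i j σ
      simp only [hmom]
      congr 1
      funext U
      congr 1
      refine Finset.sum_congr rfl fun m _ => ?_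
      exact momQ_perm (F U m) _ (hF U m) i j 1 σ
    · rw [← integral_finsetSum _ (fun i _ => hint i i)]
      have : ∀ᵐ U ∂μ, ∑ i : Fin k → Fin dS, moment U i i = 1 := by
        filter_upwards [hμsupp] with U hU
        simp only [hmom]
        rw [← Finset.mul_sum, Finset.sum_comm]
        simp only [momQ_trace hk]
        have := total_weight U hU ψ hψ
        have h2 : ∑ m, (F U m).trace = (dS : ℂ) := by
          rw [← this]
          simp only [Matrix.trace, Matrix.diag, hF]
        rw [h2, inv_mul_cancel₀ hdS']
      rw [integral_congr_ae this]
      simp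
end
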